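/- arXiv:2509.23399 — 2 statements merged into one kernel-verified Lean document; each statement's English description precedes it below -/
import Mathlib

section
/- Fix T > 0 and let A : [0,T] → (n×n real symmetric matrices) be twice differentiable, with first and second derivatives A'_t and A''_t. Suppose that for every t ∈ [0,T] one has A''_t ⪰ (A'_t)² in the Loewner order. Then for every unit vector w ∈ ℝⁿ the function [0,T] ∋ t ↦ e^{−⟨w, A_t w⟩} is concave on [0,T]. -/
open Matrix Set

/-!
Put `f t = ⟨w, A_t w⟩`. Then `(exp (-f))'' = exp (-f) * (f' ^ 2 - f'')`, so concavity of `exp (-f)`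
amounts to `f' ^ 2 ≤ f''`. Since `A'_t` is Hermitian and `‖w‖ ≤ 1`, Cauchy–Schwarz gives
`⟨w, A'_t w⟩ ^ 2 ≤ ‖A'_t w‖ ^ 2 = ⟨w, A'_t ^ 2 w⟩`, and the Loewner inequality bounds the right-hand
side by `⟨w, A''_t w⟩`.
-/

theorem concaveOn_exp_neg_of_deriv_sq_le_deriv2 {s : Set ℝ} (hs : Convex ℝ s) {f f' f'' : ℝ → ℝ}
    (hf : ContinuousOn f s)
    (hf' : ∀ t ∈ interior s, HasDerivWithinAt f (f' t) (interior s) t)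
    (hf'' : ∀ t ∈ interior s, HasDerivWithinAt f' (f'' t) (interior s) t)
    (hle : ∀ t ∈ interior s, f' t ^ 2 ≤ f'' t) :
    ConcaveOn ℝ s fun t => Real.exp (-f t) := by
  have hexp' : ∀ t ∈ interior s,
      HasDerivWithinAt (fun t => Real.exp (-f t)) (Real.exp (-f t) * -f' t) (interior s) t :=
    fun t ht => (hf' t ht).fun_neg.exp
  refine concaveOn_of_hasDerivWithinAt2_nonpos hs hf.neg.rexp hexp'
    (fun t ht => (hexp' t ht).mul (hf'' t ht).fun_neg) fun t ht => ?_
  calc Real.exp (-f t) * -f' t * -f' t + Real.exp (-f t) * -f'' t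
      = Real.exp (-f t) * (f' t ^ 2 - f'' t) := by ring
    _ ≤ 0 := mul_nonpos_of_nonneg_of_nonpos (Real.exp_nonneg _) (sub_nonpos.2 (hle t ht))

theorem hasDerivWithinAt_dotProduct_mulVec {𝕜 R m n : Type*} [NontriviallyNormedField 𝕜]
    [NormedRing R] [NormedAlgebra 𝕜 R] [Fintype m] [Fintype n]
    {A : 𝕜 → Matrix m n R} {A' : Matrix m n R} {s : Set 𝕜} {t : 𝕜}
    (hA : ∀ i j, HasDerivWithinAt (fun x => A x i j) (A' i j) s t) (v : m → R) (w : n → R) :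
    HasDerivWithinAt (fun x => v ⬝ᵥ A x *ᵥ w) (v ⬝ᵥ A' *ᵥ w) s t :=
  HasDerivWithinAt.fun_sum fun i _ => .const_mul (v i) <|
    HasDerivWithinAt.fun_sum fun j _ => (hA i j).mul_const (w j)

section RCLike

open scoped ComplexOrder

variable {𝕜 n : Type*} [RCLike 𝕜]

theorem isHermitian_of_hasDerivWithinAt {A : ℝ → Matrix n n 𝕜} {A' : Matrix n n 𝕜} {s : Set ℝ}
    {t : ℝ} (hs : UniqueDiffWithinAt ℝ s t) (ht : t ∈ s) (hherm : ∀ x ∈ s, (A x).IsHermitian)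
    (hA : ∀ i j, HasDerivWithinAt (fun x => A x i j) (A' i j) s t) : A'.IsHermitian :=
  .ext fun i j => hs.eq_deriv _ (hA j i).star <|
    (hA i j).congr_of_mem (fun x hx => (hherm x hx).apply i j) ht

variable [Fintype n]

theorem re_dotProduct_mulVec_sq_le [DecidableEq n] {M : Matrix n n 𝕜} (hM : M.IsHermitian)
    (w : n → 𝕜) :
    RCLike.re (star w ⬝ᵥ M *ᵥ w) ^ 2 ≤
      RCLike.re (star w ⬝ᵥ w) * RCLike.re (star w ⬝ᵥ (M ^ 2) *ᵥ w) := by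
  have norm_sq_toLp (v : n → 𝕜) : ‖WithLp.toLp 2 v‖ ^ 2 = RCLike.re (star v ⬝ᵥ v) := by
    rw [← inner_self_eq_norm_sq (𝕜 := 𝕜), EuclideanSpace.inner_toLp_toLp, dotProduct_comm]
  have dotProduct_sq_mulVec : star w ⬝ᵥ (M ^ 2) *ᵥ w = star (M *ᵥ w) ⬝ᵥ M *ᵥ w := by
    rw [star_mulVec, hM.eq, ← dotProduct_mulVec, mulVec_mulVec, sq]
  have cauchy_schwarz :
      |RCLike.re (star w ⬝ᵥ M *ᵥ w)| ≤ ‖WithLp.toLp 2 w‖ * ‖WithLp.toLp 2 (M *ᵥ w)‖ := by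
    rw [dotProduct_comm, ← EuclideanSpace.inner_toLp_toLp]
    exact (RCLike.abs_re_le_norm _).trans (norm_inner_le_norm _ _)
  rw [dotProduct_sq_mulVec, ← norm_sq_toLp, ← norm_sq_toLp, ← mul_pow]
  exact sq_le_sq' (abs_le.1 cauchy_schwarz).1 (abs_le.1 cauchy_schwarz).2

theorem re_dotProduct_mulVec_sq_le_of_posSemidef_sub_sq [DecidableEq n] {M N : Matrix n n 𝕜}
    (hM : M.IsHermitian) (hMN : (N - M ^ 2).PosSemidef) {w : n → 𝕜} (hw : star w ⬝ᵥ w ≤ 1) :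
    RCLike.re (star w ⬝ᵥ M *ᵥ w) ^ 2 ≤ RCLike.re (star w ⬝ᵥ N *ᵥ w) := by
  have hw_re : RCLike.re (star w ⬝ᵥ w) ≤ 1 := by simpa only [RCLike.one_re] using RCLike.re_le_re hw
  have hsq_nonneg : 0 ≤ RCLike.re (star w ⬝ᵥ (M ^ 2) *ᵥ w) := by
    have hsq : (M ^ 2).PosSemidef := by
      simpa only [hM.eq, ← sq] using posSemidef_conjTranspose_mul_self M
    exact hsq.re_dotProduct_nonneg w
  calc RCLike.re (star w ⬝ᵥ M *ᵥ w) ^ 2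
      ≤ RCLike.re (star w ⬝ᵥ w) * RCLike.re (star w ⬝ᵥ (M ^ 2) *ᵥ w) :=
        re_dotProduct_mulVec_sq_le hM w
    _ ≤ RCLike.re (star w ⬝ᵥ (M ^ 2) *ᵥ w) := mul_le_of_le_one_left hsq_nonneg hw_re
    _ ≤ RCLike.re (star w ⬝ᵥ N *ᵥ w) := by
      simpa only [sub_mulVec, dotProduct_sub, map_sub, sub_nonneg] using hMN.re_dotProduct_nonneg w

theorem stmt_2_general [DecidableEq n] {s : Set ℝ} (hs : Convex ℝ s) {A A' A'' : ℝ → Matrix n n 𝕜}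
    (hcont : ContinuousOn A s)
    (hherm : ∀ t ∈ interior s, (A t).IsHermitian)
    (hA' : ∀ t ∈ interior s, ∀ i j,
      HasDerivWithinAt (fun x => A x i j) (A' t i j) (interior s) t)
    (hA'' : ∀ t ∈ interior s, ∀ i j,
      HasDerivWithinAt (fun x => A' x i j) (A'' t i j) (interior s) t)
    (hLoewner : ∀ t ∈ interior s, (A'' t - A' t ^ 2).PosSemidef)
    {w : n → 𝕜} (hw : star w ⬝ᵥ w ≤ 1) :
    ConcaveOn ℝ s fun t => Real.exp (-RCLike.re (star w ⬝ᵥ A t *ᵥ w)) := by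
  have hherm' : ∀ t ∈ interior s, (A' t).IsHermitian := fun t ht =>
    isHermitian_of_hasDerivWithinAt (isOpen_interior.uniqueDiffWithinAt ht) ht hherm (hA' t ht)
  have hasDeriv_re {B : ℝ → Matrix n n 𝕜} {B' : Matrix n n 𝕜} {t : ℝ}
      (hB : ∀ i j, HasDerivWithinAt (fun x => B x i j) (B' i j) (interior s) t) :
      HasDerivWithinAt (fun x => RCLike.re (star w ⬝ᵥ B x *ᵥ w)) (RCLike.re (star w ⬝ᵥ B' *ᵥ w))
        (interior s) t :=
    (RCLike.reCLM (K := 𝕜)).hasFDerivAt.comp_hasDerivWithinAt t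
      (hasDerivWithinAt_dotProduct_mulVec hB (star w) w)
  have hcont_re : ContinuousOn (fun t => RCLike.re (star w ⬝ᵥ A t *ᵥ w)) s :=
    Continuous.comp_continuousOn (g := fun M : Matrix n n 𝕜 => RCLike.re (star w ⬝ᵥ M *ᵥ w))
      (by fun_prop) hcont
  exact concaveOn_exp_neg_of_deriv_sq_le_deriv2 hs hcont_re
    (fun t ht => hasDeriv_re (hA' t ht)) (fun t ht => hasDeriv_re (hA'' t ht)) fun t ht =>
      re_dotProduct_mulVec_sq_le_of_posSemidef_sub_sq (hherm' t ht) (hLoewner t ht) hw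

end RCLike

/-- If `A : [0,T] → Symₙ(ℝ)` is twice differentiable with
`A''_t ⪰ (A'_t)²` (Loewner order) for all `t ∈ [0,T]`, then for every unit vector `w`
the map `t ↦ exp (-⟨w, A_t w⟩)` is concave on `[0,T]`. -/
theorem stmt_2 {n : ℕ} {T : ℝ} (hT : 0 < T)
    (A A' A'' : ℝ → Matrix (Fin n) (Fin n) ℝ)
    (hsymm : ∀ t ∈ Icc (0 : ℝ) T, (A t).IsSymm)
    (hA' : ∀ t ∈ Icc (0 : ℝ) T, ∀ i j,
      HasDerivWithinAt (fun s => A s i j) (A' t i j) (Icc (0 : ℝ) T) t)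
    (hA'' : ∀ t ∈ Icc (0 : ℝ) T, ∀ i j,
      HasDerivWithinAt (fun s => A' s i j) (A'' t i j) (Icc (0 : ℝ) T) t)
    (hLoewner : ∀ t ∈ Icc (0 : ℝ) T, (A'' t - (A' t) ^ 2).PosSemidef)
    (w : Fin n → ℝ) (hw : w ⬝ᵥ w = 1) :
    ConcaveOn ℝ (Icc (0 : ℝ) T) (fun t => Real.exp (-(w ⬝ᵥ (A t *ᵥ w)))) :=
  stmt_2_general (convex_Icc 0 T)
    (continuousOn_pi.2 fun i => continuousOn_pi.2 fun j t ht => (hA' t ht i j).continuousWithinAt)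
    (fun t ht => hsymm t (interior_subset ht))
    (fun t ht i j => (hA' t (interior_subset ht) i j).mono interior_subset)
    (fun t ht i j => (hA'' t (interior_subset ht) i j).mono interior_subset)
    (fun t ht => hLoewner t (interior_subset ht)) hw.le
end

section
/- Let H : [0,1] → (n×n real symmetric matrices) be twice differentiable with H_0 = 0 and H''_t ⪰ (H'_t)² in the Loewner order for all t ∈ [0,1]. Then for every unit vector w ∈ ℝⁿ one has ⟨w, H'_0 w⟩ ≤ 1 − e^{−⟨w, H_1 w⟩}. -/
open Matrix Set

/-!
Put `h t = re ⟪x, T t x⟫` for a vector `x` with `‖x‖ ≤ 1`. The derivative `T'` inherits symmetry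
from `T`, so Cauchy–Schwarz gives `(h')² ≤ ‖T' x‖² = re ⟪x, T'² x⟫ ≤ h''`. This is exactly the
condition for `exp (-h)` to be concave, since its second derivative is `(h'² - h'') exp (-h)`. The
graph of a concave function lies below its tangent at the left endpoint, and this is the claim.
-/

lemma concaveOn_exp_neg_of_sq_le {D : Set ℝ} (hD : Convex ℝ D) {h h' h'' : ℝ → ℝ}
    (hcont : ContinuousOn h D)
    (hh' : ∀ t ∈ interior D, HasDerivWithinAt h (h' t) (interior D) t)
    (hh'' : ∀ t ∈ interior D, HasDerivWithinAt h' (h'' t) (interior D) t)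
    (hsq : ∀ t ∈ interior D, h' t ^ 2 ≤ h'' t) :
    ConcaveOn ℝ D fun t ↦ Real.exp (-h t) := by
  have hexp (t) (ht : t ∈ interior D) := (hh' t ht).fun_neg.exp
  refine concaveOn_of_hasDerivWithinAt2_nonpos hD hcont.neg.rexp hexp
    (fun t ht ↦ (hexp t ht).fun_mul (hh'' t ht).fun_neg) fun t ht ↦ ?_
  calc Real.exp (-h t) * -h' t * -h' t + Real.exp (-h t) * -h'' t
      = Real.exp (-h t) * (h' t ^ 2 - h'' t) := by ring
    _ ≤ 0 := mul_nonpos_of_nonneg_of_nonpos (Real.exp_nonneg _) (sub_nonpos.2 (hsq t ht))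

lemma sub_mul_deriv_le_one_sub_exp {D : Set ℝ} {h : ℝ → ℝ} {h' a b : ℝ}
    (hconc : ConcaveOn ℝ D fun t ↦ Real.exp (-h t)) (ha : a ∈ D) (hb : b ∈ D) (hab : a < b)
    (hh' : HasDerivWithinAt h h' D a) :
    (b - a) * h' ≤ 1 - Real.exp (h a - h b) := by
  have hslope := hconc.slope_le_of_hasDerivWithinAt ha hb hab hh'.fun_neg.exp
  rw [slope_def_field, div_le_iff₀ (sub_pos.2 hab)] at hslope
  have hfactor : Real.exp (-h b) = Real.exp (-h a) * Real.exp (h a - h b) := by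
    rw [← Real.exp_add]
    ring_nf
  rw [hfactor] at hslope
  refine le_of_mul_le_mul_left ?_ (Real.exp_pos (-h a))
  linarith

section Operator

open RCLike
open scoped InnerProductSpace

variable {𝕜 E : Type*} [RCLike 𝕜] [NormedAddCommGroup E] [InnerProductSpace 𝕜 E]

/-- `HasWeakDerivWithinAt T T' s t` says that `T'` is the derivative at `t`, within `s`, of the
family of operators `T`, in the weak sense: every matrix coefficient `⟪x, T r y⟫_𝕜`
has derivative `⟪x, T' y⟫_𝕜`. Only scalars are differentiated, so the space of operators needs no
topology. -/
def HasWeakDerivWithinAt (T : ℝ → E →ₗ[𝕜] E) (T' : E →ₗ[𝕜] E) (s : Set ℝ) (t : ℝ) : Prop :=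
  ∀ x y : E, HasDerivWithinAt (fun r ↦ ⟪x, T r y⟫_𝕜) ⟪x, T' y⟫_𝕜 s t

namespace HasWeakDerivWithinAt

variable {T : ℝ → E →ₗ[𝕜] E} {T' : E →ₗ[𝕜] E} {s : Set ℝ} {t : ℝ}

lemma re_inner (hT : HasWeakDerivWithinAt T T' s t) (x y : E) :
    HasDerivWithinAt (fun r ↦ re ⟪x, T r y⟫_𝕜) (re ⟪x, T' y⟫_𝕜) s t :=
  (reCLM (K := 𝕜)).hasFDerivAt.comp_hasDerivWithinAt t (hT x y)

lemma isSymmetric (hT : HasWeakDerivWithinAt T T' s t) (hs : UniqueDiffWithinAt ℝ s t)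
    (ht : t ∈ s) (hsymm : ∀ r ∈ s, (T r).IsSymmetric) : T'.IsSymmetric := by
  intro x y
  have hleft : HasDerivWithinAt (fun r ↦ ⟪T r x, y⟫_𝕜) ⟪T' x, y⟫_𝕜 s t := by
    simpa only [RCLike.star_def, inner_conj_symm] using (hT y x).star
  exact hs.eq_deriv s hleft ((hT x y).congr_of_mem (fun r hr ↦ hsymm r hr x y) ht)

end HasWeakDerivWithinAt

lemma sq_re_inner_le_of_isPositive_sub_sq {A B : E →ₗ[𝕜] E} (hA : A.IsSymmetric)
    (hAB : (B - A ^ 2).IsPositive) {x : E} (hx : ‖x‖ ≤ 1) :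
    re ⟪x, A x⟫_𝕜 ^ 2 ≤ re ⟪x, B x⟫_𝕜 := by
  have hcs : |re ⟪x, A x⟫_𝕜| ≤ ‖A x‖ :=
    calc |re ⟪x, A x⟫_𝕜| ≤ ‖x‖ * ‖A x‖ := (abs_re_le_norm _).trans (norm_inner_le_norm _ _)
      _ ≤ ‖A x‖ := mul_le_of_le_one_left (norm_nonneg _) hx
  have hpos : 0 ≤ re ⟪x, B x⟫_𝕜 - re ⟪x, (A ^ 2) x⟫_𝕜 := by
    simpa only [LinearMap.sub_apply, inner_sub_right, map_sub] using hAB.re_inner_nonneg_right x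
  calc re ⟪x, A x⟫_𝕜 ^ 2 ≤ ‖A x‖ ^ 2 := sq_le_sq' (abs_le.1 hcs).1 (abs_le.1 hcs).2
    _ = re ⟪x, (A ^ 2) x⟫_𝕜 := by
      rw [← inner_self_eq_norm_sq (𝕜 := 𝕜), hA, pow_two, Module.End.mul_apply]
    _ ≤ re ⟪x, B x⟫_𝕜 := sub_nonneg.1 hpos

lemma concaveOn_exp_neg_re_inner {D : Set ℝ} (hD : Convex ℝ D) {T T' T'' : ℝ → E →ₗ[𝕜] E}
    (hsymm : ∀ t ∈ D, (T t).IsSymmetric)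
    (hT' : ∀ t ∈ D, HasWeakDerivWithinAt T (T' t) D t)
    (hT'' : ∀ t ∈ D, HasWeakDerivWithinAt T' (T'' t) D t)
    (hpos : ∀ t ∈ D, (T'' t - T' t ^ 2).IsPositive) {x : E} (hx : ‖x‖ ≤ 1) :
    ConcaveOn ℝ D fun t ↦ Real.exp (-re ⟪x, T t x⟫_𝕜) := by
  have hsymm' (t) (ht : t ∈ interior D) : (T' t).IsSymmetric :=
    have htD := interior_subset ht
    (hT' t htD).isSymmetric (uniqueDiffWithinAt_of_mem_nhds (mem_interior_iff_mem_nhds.1 ht))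
      htD hsymm
  exact concaveOn_exp_neg_of_sq_le hD
    (fun t ht ↦ ((hT' t ht).re_inner x x).continuousWithinAt)
    (fun t ht ↦ ((hT' t (interior_subset ht)).re_inner x x).mono interior_subset)
    (fun t ht ↦ ((hT'' t (interior_subset ht)).re_inner x x).mono interior_subset)
    fun t ht ↦ sq_re_inner_le_of_isPositive_sub_sq (hsymm' t ht) (hpos t (interior_subset ht)) hx

theorem stmt_8_general {a b : ℝ} (hab : a < b) {T T' T'' : ℝ → E →ₗ[𝕜] E}
    (hsymm : ∀ t ∈ Icc a b, (T t).IsSymmetric)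
    (hT' : ∀ t ∈ Icc a b, HasWeakDerivWithinAt T (T' t) (Icc a b) t)
    (hT'' : ∀ t ∈ Icc a b, HasWeakDerivWithinAt T' (T'' t) (Icc a b) t)
    (hpos : ∀ t ∈ Icc a b, (T'' t - T' t ^ 2).IsPositive) {x : E} (hx : ‖x‖ ≤ 1) :
    (b - a) * re ⟪x, T' a x⟫_𝕜 ≤ 1 - Real.exp (re ⟪x, T a x⟫_𝕜 - re ⟪x, T b x⟫_𝕜) :=
  have ha := left_mem_Icc.2 hab.le
  sub_mul_deriv_le_one_sub_exp (concaveOn_exp_neg_re_inner (convex_Icc a b) hsymm hT' hT'' hpos hx)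
    ha (right_mem_Icc.2 hab.le) hab ((hT' a ha).re_inner x x)

end Operator

section Matrix

open scoped InnerProductSpace

variable {𝕜 ι : Type*} [RCLike 𝕜] [Fintype ι] [DecidableEq ι]

lemma inner_toEuclideanLin (A : Matrix ι ι 𝕜) (x y : EuclideanSpace 𝕜 ι) :
    ⟪x, A.toEuclideanLin y⟫_𝕜 = star x.ofLp ⬝ᵥ (A *ᵥ y.ofLp) := by
  rw [EuclideanSpace.inner_eq_star_dotProduct, dotProduct_comm]
  rfl

lemma hasWeakDerivWithinAt_toEuclideanLin {A : ℝ → Matrix ι ι 𝕜} {A' : Matrix ι ι 𝕜}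
    {s : Set ℝ} {t : ℝ} (hA : ∀ i j, HasDerivWithinAt (fun r ↦ A r i j) (A' i j) s t) :
    HasWeakDerivWithinAt (fun r ↦ (A r).toEuclideanLin) A'.toEuclideanLin s t := by
  intro x y
  simp only [inner_toEuclideanLin, dotProduct, mulVec]
  exact .fun_sum fun i _ ↦ .const_mul _ <| .fun_sum fun j _ ↦ (hA i j).mul_const _

end Matrix

/-- If `H : [0,1] → Symₙ(ℝ)` is twice differentiable with `H_0 = 0` and
`H''_t ⪰ (H'_t)²`, then for every unit vector `w` one has
`⟨w, H'_0 w⟩ ≤ 1 - exp (-⟨w, H_1 w⟩)`. -/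
theorem stmt_8 {n : ℕ} (H H' H'' : ℝ → Matrix (Fin n) (Fin n) ℝ)
    (hsymm : ∀ t ∈ Icc (0 : ℝ) 1, (H t).IsSymm)
    (hH' : ∀ t ∈ Icc (0 : ℝ) 1, ∀ i j,
      HasDerivWithinAt (fun s => H s i j) (H' t i j) (Icc (0 : ℝ) 1) t)
    (hH'' : ∀ t ∈ Icc (0 : ℝ) 1, ∀ i j,
      HasDerivWithinAt (fun s => H' s i j) (H'' t i j) (Icc (0 : ℝ) 1) t)
    (hH0 : H 0 = 0)
    (hLoewner : ∀ t ∈ Icc (0 : ℝ) 1, (H'' t - (H' t) ^ 2).PosSemidef)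
    (w : Fin n → ℝ) (hw : w ⬝ᵥ w = 1) :
    w ⬝ᵥ (H' 0 *ᵥ w) ≤ 1 - Real.exp (-(w ⬝ᵥ (H 1 *ᵥ w))) := by
  have hw' : ‖WithLp.toLp 2 w‖ = 1 := by
    simpa [EuclideanSpace.norm_eq, dotProduct, pow_two] using hw
  simpa [-toLpLin_toLp, inner_toEuclideanLin, hH0] using stmt_8_general zero_lt_one
    (fun t ht ↦ isSymmetric_toEuclideanLin_iff.2 (isHermitian_iff_isSymm.2 (hsymm t ht)))
    (fun t ht ↦ hasWeakDerivWithinAt_toEuclideanLin (hH' t ht))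
    (fun t ht ↦ hasWeakDerivWithinAt_toEuclideanLin (hH'' t ht))
    (fun t ht ↦ by simpa using isPositive_toEuclideanLin_iff.2 (hLoewner t ht)) hw'.le
end
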